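/- Let G be a finite abelian group, and let G₀ ⊆ G be a minimal non-half-factorial LCN-set with min Δ(G₀) = max Δ*(G). Let g ∈ G₀ satisfy g ∈ ⟨G₀ \ {g}⟩. If k ∈ [1, ord(g)] is such that k·g ∉ ⟨E⟩ for every proper subset E ⊊ G₀ \ {g}, then there exists an atom A over G₀ with v_g(A) = k and cross number k(A) > 1. -/

import Mathlib

open Multiset

section Defs

variable {G : Type*} [AddCommGroup G]

/-- `S` is a zero-sum sequence over `G₀`: a multiset with entries in `G₀` and sum `0`. -/
def IsZeroSumSeq (G₀ : Set G) (S : Multiset G) : Prop :=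
  (∀ x ∈ S, x ∈ G₀) ∧ S.sum = 0

/-- `S` is an atom over `G₀`: a nonempty zero-sum sequence over `G₀` that is not the
union of two nonempty zero-sum sequences over `G₀`. -/
def IsAtomSeq (G₀ : Set G) (S : Multiset G) : Prop :=
  IsZeroSumSeq G₀ S ∧ S ≠ 0 ∧
    ∀ A B : Multiset G, IsZeroSumSeq G₀ A → IsZeroSumSeq G₀ B →
      A ≠ 0 → B ≠ 0 → S ≠ A + B

/-- The set of lengths of `B`: all `k` such that `B` is a union of `k` atoms over `G₀`. -/
def LengthSet (G₀ : Set G) (B : Multiset G) : Set ℕ :=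
  {k | ∃ l : Multiset (Multiset G), Multiset.card l = k ∧
      (∀ A ∈ l, IsAtomSeq G₀ A) ∧ l.sum = B}

/-- The set of successive distances of a set of naturals. -/
def DeltaOf (L : Set ℕ) : Set ℕ :=
  {d | ∃ x ∈ L, ∃ y ∈ L, x < y ∧ y - x = d ∧ ∀ z ∈ L, ¬(x < z ∧ z < y)}

/-- The set of distances `Δ(G₀)`. -/
def DeltaSet (G₀ : Set G) : Set ℕ :=
  {d | ∃ B : Multiset G, IsZeroSumSeq G₀ B ∧ B ≠ 0 ∧ d ∈ DeltaOf (LengthSet G₀ B)}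

/-- `G₀` is half-factorial if `Δ(G₀) = ∅`. -/
def IsHalfFactorialSet (G₀ : Set G) : Prop := DeltaSet G₀ = ∅

/-- `G₀` is minimal non-half-factorial if `Δ(G₀) ≠ ∅` and every proper subset is
half-factorial. -/
def IsMinNonHalfFactorial (G₀ : Set G) : Prop :=
  (DeltaSet G₀).Nonempty ∧ ∀ G₁ : Set G, G₁ ⊂ G₀ → DeltaSet G₁ = ∅

/-- The cross number `k(S) = Σ 1/ord(g)` of a multiset over `G`. -/
noncomputable def crossNumber (S : Multiset G) : ℚ :=
  (S.map (fun g => ((addOrderOf g : ℚ))⁻¹)).sum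

/-- `G₀` is an LCN-set if every atom over `G₀` has cross number at least 1. -/
def IsLCNSet (G₀ : Set G) : Prop :=
  ∀ U : Multiset G, IsAtomSeq G₀ U → 1 ≤ crossNumber U

/-- A subset of `G \ {0}` is independent if any integral linear relation on its elements
has all summands zero. -/
def IsIndependentSet (E : Set G) : Prop :=
  (0 : G) ∉ E ∧ ∀ s : Finset G, ↑s ⊆ E → ∀ f : G → ℤ,
    (∑ e ∈ s, f e • e) = 0 → ∀ e ∈ s, f e • e = 0

/-- `d` is a greatest common divisor of the set `S` of naturals. -/
def IsSetGcd (S : Set ℕ) (d : ℕ) : Prop :=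
  (∀ s ∈ S, d ∣ s) ∧ ∀ e : ℕ, (∀ s ∈ S, e ∣ s) → e ∣ d

end Defs

/-- The set of minimal distances `Δ*(G)`. -/
def DeltaStar (G : Type*) [AddCommGroup G] : Set ℕ :=
  {d | ∃ G₀ : Set G, (DeltaSet G₀).Nonempty ∧ d = sInf (DeltaSet G₀)}

/-- The `p`-rank of a finite abelian group: `log_p` of the order of the `p`-torsion
subgroup `{x | p • x = 0}`. -/
noncomputable def pRank (G : Type*) [AddCommGroup G] (p : ℕ) : ℕ :=
  Nat.log p (Nat.card {x : G // p • x = 0})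

/-- The rank of a finite abelian group: the maximum of the `p`-ranks over all primes. -/
noncomputable def rankG (G : Type*) [AddCommGroup G] : ℕ :=
  sSup {r : ℕ | ∃ p : ℕ, p.Prime ∧ r = pRank G p}

/-!
Write `m = max Δ*(G) = min Δ(G₀)`. Pairs `{a, -a}` give `ord(a) ≤ m + 2` for every `a`, and sets
consisting of a basis of the `p`-torsion subgroup and its sum bound the `p`-rank of `G` by `m + 1`.

Let `H` be generated by the multiples `v_g(A) • g` for the atoms `A` whose support is a proper
subset of `G₀`, and let `h` be the order of `g` modulo `H`. Then `h • g` lies in the subgroup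
generated by `G₀ \ {g, x}` for some `x ≠ g`, so `k • g ∉ H` and `h ≠ 1`. Consequently `G₀ \ {g}`
is independent modulo any prime divisor of `h`, and the rank bound gives `|G₀| ≤ m + 2`.

Since `k • g ∈ ⟨G₀ \ {g}⟩`, there is a proper zero-sum subsequence `B` of `∏ x ^ ord(x)`, `x ∈ G₀`,
with `v_g(B) = k`. As `k • g ∉ H`, some atom `A` dividing `B` has full support, and full support
forces `k(A) > 1`. The product `∏ x ^ ord(x)` has length and cross number `|G₀| ≤ m + 2`, so a
factorization of it involving `A` has length at most `|G₀| - m ≤ 2`. Hence `A = B`.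
-/

section Sequences

variable {G : Type*} [AddCommGroup G] {G₀ G₁ : Set G} {A B U : Multiset G}

lemma isZeroSumSeq_zero : IsZeroSumSeq G₀ 0 :=
  ⟨fun x hx => absurd hx (notMem_zero x), sum_zero⟩

lemma IsZeroSumSeq.mono (h : G₁ ⊆ G₀) (hB : IsZeroSumSeq G₁ B) : IsZeroSumSeq G₀ B :=
  ⟨fun x hx => h (hB.1 x hx), hB.2⟩

lemma IsZeroSumSeq.add (hA : IsZeroSumSeq G₀ A) (hB : IsZeroSumSeq G₀ B) :
    IsZeroSumSeq G₀ (A + B) :=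
  ⟨fun x hx => (mem_add.1 hx).elim (hA.1 x) (hB.1 x), by rw [sum_add, hA.2, hB.2, add_zero]⟩

lemma IsZeroSumSeq.of_add_left (hA : IsZeroSumSeq G₀ A) (hAB : IsZeroSumSeq G₀ (A + B)) :
    IsZeroSumSeq G₀ B :=
  ⟨fun x hx => hAB.1 x (mem_add.2 (Or.inr hx)), by simpa [hA.2] using hAB.2⟩

lemma IsZeroSumSeq.multiset_sum {l : Multiset (Multiset G)} (hl : ∀ A ∈ l, IsZeroSumSeq G₀ A) :
    IsZeroSumSeq G₀ l.sum := by
  induction l using Multiset.induction_on with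
  | empty => exact isZeroSumSeq_zero
  | cons A l ih =>
    rw [sum_cons]
    exact (hl A (mem_cons_self A l)).add (ih fun B hB => hl B (mem_cons_of_mem hB))

lemma IsAtomSeq.eq_of_le (hU : IsAtomSeq G₀ U) (hB : IsZeroSumSeq G₀ B) (hB₀ : B ≠ 0)
    (hBU : B ≤ U) : B = U := by
  obtain ⟨C, rfl⟩ := Multiset.le_iff_exists_add.1 hBU
  by_contra hne
  exact hU.2.2 B C hB (hB.of_add_left hU.1) hB₀ (fun hC => hne (by rw [hC, add_zero])) rfl

lemma isAtomSeq_iff : IsAtomSeq G₀ U ↔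
    IsZeroSumSeq G₀ U ∧ U ≠ 0 ∧ ∀ B ≤ U, IsZeroSumSeq G₀ B → B ≠ 0 → B = U := by
  refine ⟨fun hU => ⟨hU.1, hU.2.1, fun B hBU hB hB₀ => hU.eq_of_le hB hB₀ hBU⟩,
    fun ⟨hzero, hne, hmin⟩ => ⟨hzero, hne, ?_⟩⟩
  rintro A B hA - hA₀ hB₀ rfl
  exact hB₀ (by simpa using hmin A (Multiset.le_add_right A B) hA hA₀)

lemma isAtomSeq_iff_of_subset (h : G₁ ⊆ G₀) :
    IsAtomSeq G₁ U ↔ IsAtomSeq G₀ U ∧ ∀ x ∈ U, x ∈ G₁ := by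
  refine ⟨fun hU => ⟨?_, hU.1.1⟩, fun ⟨hU, hmem⟩ => ?_⟩
  · exact isAtomSeq_iff.2 ⟨hU.1.mono h, hU.2.1, fun B hBU hB hB₀ =>
      hU.eq_of_le ⟨fun x hx => hU.1.1 x (mem_of_le hBU hx), hB.2⟩ hB₀ hBU⟩
  · exact ⟨⟨hmem, hU.1.2⟩, hU.2.1, fun A B hA hB => hU.2.2 A B (hA.mono h) (hB.mono h)⟩

lemma IsZeroSumSeq.exists_factorization (hB : IsZeroSumSeq G₀ B) :
    ∃ l : Multiset (Multiset G), (∀ A ∈ l, IsAtomSeq G₀ A) ∧ l.sum = B := by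
  induction B using Multiset.strongInductionOn with
  | ih B ih =>
    by_cases hB₀ : B = 0
    · exact ⟨0, by simp, by simp [hB₀]⟩
    by_cases hatom : IsAtomSeq G₀ B
    · exact ⟨{B}, by simpa using hatom, by simp⟩
    obtain ⟨A, C, hA, hC, hA₀, hC₀, rfl⟩ : ∃ A C : Multiset G, IsZeroSumSeq G₀ A ∧
        IsZeroSumSeq G₀ C ∧ A ≠ 0 ∧ C ≠ 0 ∧ B = A + C := by
      by_contra! h
      exact hatom ⟨hB, hB₀, h⟩
    obtain ⟨l, hl, rfl⟩ := ih A (lt_add_of_pos_right A (pos_iff_ne_zero.2 hC₀)) hA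
    obtain ⟨m, hm, rfl⟩ := ih C (lt_add_of_pos_left C (pos_iff_ne_zero.2 hA₀)) hC
    exact ⟨l + m, fun X hX => (mem_add.1 hX).elim (hl X) (hm X), sum_add l m⟩

end Sequences

section Lengths

variable {G : Type*} [AddCommGroup G] {G₀ : Set G} {B C U : Multiset G} {x y : ℕ}

lemma zero_mem_lengthSet : 0 ∈ LengthSet G₀ 0 := ⟨0, by simp⟩

lemma IsAtomSeq.one_mem_lengthSet (hU : IsAtomSeq G₀ U) : 1 ∈ LengthSet G₀ U :=
  ⟨{U}, by simp, by simpa using hU, by simp⟩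

lemma add_mem_lengthSet (hx : x ∈ LengthSet G₀ B) (hy : y ∈ LengthSet G₀ C) :
    x + y ∈ LengthSet G₀ (B + C) := by
  obtain ⟨l, rfl, hl, rfl⟩ := hx
  obtain ⟨m, rfl, hm, rfl⟩ := hy
  exact ⟨l + m, card_add l m, fun X hX => (mem_add.1 hX).elim (hl X) (hm X), sum_add l m⟩

lemma nsmul_mem_lengthSet (hx : x ∈ LengthSet G₀ B) (n : ℕ) : n * x ∈ LengthSet G₀ (n • B) := by
  induction n with
  | zero => simpa using zero_mem_lengthSet
  | succ n ih =>
    rw [succ_nsmul, Nat.succ_mul]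
    exact add_mem_lengthSet ih hx

lemma card_mem_lengthSet_sum {ι : Type*} {s : Finset ι} {f : ι → Multiset G}
    (hf : ∀ i ∈ s, IsAtomSeq G₀ (f i)) : s.card ∈ LengthSet G₀ (∑ i ∈ s, f i) :=
  ⟨s.val.map f, by simp, by simpa using hf, rfl⟩

lemma isZeroSumSeq_of_mem_lengthSet (hx : x ∈ LengthSet G₀ B) : IsZeroSumSeq G₀ B := by
  obtain ⟨l, -, hl, rfl⟩ := hx
  exact IsZeroSumSeq.multiset_sum fun A hA => (hl A hA).1

lemma ne_zero_of_mem_lengthSet (hx : x ∈ LengthSet G₀ B) (hx₀ : 0 < x) : B ≠ 0 := by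
  obtain ⟨l, rfl, hl, rfl⟩ := hx
  obtain ⟨A, hA⟩ := card_pos_iff_exists_mem.1 hx₀
  exact fun h => (hl A hA).2.1 (sum_eq_zero_iff.1 h A hA)

lemma pos_of_mem_deltaSet (hx : x ∈ DeltaSet G₀) : 0 < x := by
  obtain ⟨_, _, _, a, -, b, -, hab, rfl, -⟩ := hx
  exact Nat.sub_pos_of_lt hab

lemma exists_mem_deltaSet_le (hx : x ∈ LengthSet G₀ B) (hy : y ∈ LengthSet G₀ B) (hxy : x < y) :
    ∃ d ∈ DeltaSet G₀, d ≤ y - x := by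
  classical
  have hex : ∃ z, z ∈ LengthSet G₀ B ∧ x < z := ⟨y, hy, hxy⟩
  have hle : Nat.find hex ≤ y := Nat.find_min' hex ⟨hy, hxy⟩
  exact ⟨Nat.find hex - x, ⟨B, isZeroSumSeq_of_mem_lengthSet hx,
    ne_zero_of_mem_lengthSet hy (Nat.zero_lt_of_lt hxy), x, hx, _, (Nat.find_spec hex).1,
    (Nat.find_spec hex).2, rfl, fun z hz hzlt => Nat.find_min hex hzlt.2 ⟨hz, hzlt.1⟩⟩,
    Nat.sub_le_sub_right hle x⟩

lemma sInf_deltaSet_add_le (hx : x ∈ LengthSet G₀ B) (hy : y ∈ LengthSet G₀ B) (hxy : x < y) :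
    sInf (DeltaSet G₀) + x ≤ y := by
  obtain ⟨d, hd, hle⟩ := exists_mem_deltaSet_le hx hy hxy
  have := Nat.sInf_le hd
  lia

lemma lengthSet_subsingleton (h : DeltaSet G₀ = ∅) : (LengthSet G₀ B).Subsingleton := by
  intro x hx y hy
  by_contra hne
  rcases lt_or_gt_of_ne hne with hlt | hlt
  · obtain ⟨d, hd, -⟩ := exists_mem_deltaSet_le hx hy hlt
    simp [h] at hd
  · obtain ⟨d, hd, -⟩ := exists_mem_deltaSet_le hy hx hlt
    simp [h] at hd

lemma map_eq_nsmul_of_mem_lengthSet {R : Type*} [AddCommMonoid R] (φ : Multiset G →+ R) {c : R}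
    (hφ : ∀ A, IsAtomSeq G₀ A → φ A = c) (hx : x ∈ LengthSet G₀ B) : φ B = x • c := by
  obtain ⟨l, rfl, hl, rfl⟩ := hx
  rw [map_multiset_sum, map_congr rfl fun A hA => hφ A (hl A hA), map_const', sum_replicate]

lemma addOrderOf_dvd_of_mem_deltaSet {R : Type*} [AddCancelCommMonoid R] (φ : Multiset G →+ R)
    {c : R} (hφ : ∀ A, IsAtomSeq G₀ A → φ A = c) (hx : x ∈ DeltaSet G₀) : addOrderOf c ∣ x := by
  obtain ⟨B, -, -, a, ha, b, hb, hab, rfl, -⟩ := hx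
  have hmul : a • c = b • c := (map_eq_nsmul_of_mem_lengthSet φ hφ ha).symm.trans
    (map_eq_nsmul_of_mem_lengthSet φ hφ hb)
  exact (Nat.modEq_iff_dvd' hab.le).1 (nsmul_eq_nsmul_iff_modEq.1 hmul)

end Lengths

section CrossNumber

variable {G : Type*} [AddCommGroup G] {G₀ : Set G} {B U : Multiset G} {x : ℕ}

/-- The cross number as an additive homomorphism. -/
noncomputable def crossNumberHom (G : Type*) [AddCommGroup G] : Multiset G →+ ℚ where
  toFun := crossNumber
  map_zero' := by simp [crossNumber]
  map_add' A B := by simp [crossNumber]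

lemma crossNumber_add (A B : Multiset G) : crossNumber (A + B) = crossNumber A + crossNumber B :=
  map_add (crossNumberHom G) A B

lemma crossNumber_multiset_sum (l : Multiset (Multiset G)) :
    crossNumber l.sum = (l.map crossNumber).sum :=
  map_multiset_sum (crossNumberHom G) l

lemma crossNumber_replicate (n : ℕ) (a : G) :
    crossNumber (replicate n a) = n * (addOrderOf a : ℚ)⁻¹ := by
  simp [crossNumber]

lemma IsLCNSet.le_crossNumber (h : IsLCNSet G₀) (hx : x ∈ LengthSet G₀ B) :
    (x : ℚ) ≤ crossNumber B := by
  obtain ⟨l, rfl, hl, rfl⟩ := hx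
  calc (card l : ℚ) = card (l.map crossNumber) • (1 : ℚ) := by simp
    _ ≤ (l.map crossNumber).sum :=
      card_nsmul_le_sum fun q hq => by
        obtain ⟨A, hA, rfl⟩ := mem_map.1 hq
        exact h A (hl A hA)
    _ = crossNumber l.sum := (crossNumber_multiset_sum l).symm

lemma IsLCNSet.exists_one_lt_crossNumber (h : IsLCNSet G₀) (hΔ : (DeltaSet G₀).Nonempty) :
    ∃ U, IsAtomSeq G₀ U ∧ 1 < crossNumber U := by
  by_contra! hle
  obtain ⟨d, hd⟩ := hΔ
  have hone (A : Multiset G) (hA : IsAtomSeq G₀ A) : crossNumberHom G A = 1 :=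
    le_antisymm (hle A hA) (h A hA)
  have hdvd : addOrderOf (1 : ℚ) ∣ d := addOrderOf_dvd_of_mem_deltaSet _ hone hd
  rw [addOrderOf_eq_zero (not_isOfFinAddOrder_of_isAddTorsionFree one_ne_zero)] at hdvd
  exact (pos_of_mem_deltaSet hd).ne' (Nat.eq_zero_of_zero_dvd hdvd)

end CrossNumber

section PowerAtoms

variable {G : Type*} [AddCommGroup G] {G₀ : Set G} {U : Multiset G} {a : G}

/-- The sequence `a ^ ord(a)`, the only atom over `{a}`. -/
noncomputable def powerAtom (a : G) : Multiset G := replicate (addOrderOf a) a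

lemma count_powerAtom_self [DecidableEq G] (a : G) : count a (powerAtom a) = addOrderOf a :=
  count_replicate_self a _

lemma isZeroSumSeq_powerAtom (ha : a ∈ G₀) : IsZeroSumSeq G₀ (powerAtom a) :=
  ⟨fun _ hx => eq_of_mem_replicate hx ▸ ha,
    by rw [powerAtom, sum_replicate, addOrderOf_nsmul_eq_zero]⟩

lemma powerAtom_ne_zero (ha : IsOfFinAddOrder a) : powerAtom a ≠ 0 := by
  simpa [powerAtom, ← card_eq_zero] using ha.addOrderOf_pos.ne'

lemma isAtomSeq_powerAtom (ha : a ∈ G₀) (hfin : IsOfFinAddOrder a) :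
    IsAtomSeq G₀ (powerAtom a) := by
  refine isAtomSeq_iff.2 ⟨isZeroSumSeq_powerAtom ha, powerAtom_ne_zero hfin, ?_⟩
  intro B hB hzero hB₀
  obtain ⟨n, hn, rfl⟩ := le_replicate_iff.1 hB
  have hdvd : addOrderOf a ∣ n := addOrderOf_dvd_iff_nsmul_eq_zero.2 (by simpa using hzero.2)
  have hpos : 0 < n := Nat.pos_of_ne_zero fun h => hB₀ (by simp [h])
  rw [powerAtom, le_antisymm hn (Nat.le_of_dvd hpos hdvd)]

lemma crossNumber_powerAtom (hfin : IsOfFinAddOrder a) : crossNumber (powerAtom a) = 1 := by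
  rw [powerAtom, crossNumber_replicate]
  exact mul_inv_cancel₀ (Nat.cast_ne_zero.2 hfin.addOrderOf_pos.ne')

lemma IsAtomSeq.eq_powerAtom [DecidableEq G] (hU : IsAtomSeq G₀ U) (haU : a ∈ U)
    (hfin : IsOfFinAddOrder a) (hcount : addOrderOf a ≤ count a U) : U = powerAtom a :=
  (hU.eq_of_le (isZeroSumSeq_powerAtom (hU.1.1 a haU)) (powerAtom_ne_zero hfin)
    (le_count_iff_replicate_le.1 hcount)).symm

lemma IsAtomSeq.count_le_addOrderOf [DecidableEq G] (hU : IsAtomSeq G₀ U)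
    (hfin : IsOfFinAddOrder a) : count a U ≤ addOrderOf a := by
  by_contra! hlt
  have h := hU.eq_powerAtom (count_pos.1 (Nat.zero_lt_of_lt hlt)) hfin hlt.le
  rw [h, count_powerAtom_self] at hlt
  exact hlt.false

/-- `N • S` regroups into powers of the atoms `powerAtom a`, which realises the length
`N * crossNumber S`. -/
lemma exists_mem_lengthSet_nsmul [Finite G] (S : Multiset G) (hS : ∀ x ∈ S, x ∈ G₀) :
    ∃ L ∈ LengthSet G₀ (Nat.card G • S), (L : ℚ) = Nat.card G * crossNumber S := by
  induction S using Multiset.induction_on with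
  | empty => exact ⟨0, by simpa using zero_mem_lengthSet, by simp [crossNumber]⟩
  | cons a S ih =>
    obtain ⟨L, hL, hLS⟩ := ih fun x hx => hS x (mem_cons_of_mem hx)
    obtain ⟨m, hm⟩ : addOrderOf a ∣ Nat.card G := addOrderOf_dvd_natCard a
    have hpow : m ∈ LengthSet G₀ (m • powerAtom a) := by
      simpa using nsmul_mem_lengthSet (isAtomSeq_powerAtom (hS a (mem_cons_self a S))
        (isOfFinAddOrder_of_finite a)).one_mem_lengthSet m
    have hregroup : Nat.card G • (a ::ₘ S) = m • powerAtom a + Nat.card G • S := by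
      rw [← singleton_add, nsmul_add, nsmul_singleton, hm, powerAtom, nsmul_replicate, mul_comm]
    refine ⟨m + L, hregroup ▸ add_mem_lengthSet hpow hL, ?_⟩
    have hord : (addOrderOf a : ℚ) ≠ 0 := Nat.cast_ne_zero.2 (addOrderOf_pos a).ne'
    rw [← singleton_add, crossNumber_add, mul_add, ← hLS, ← replicate_one, crossNumber_replicate]
    push_cast [hm]
    field_simp

lemma IsAtomSeq.crossNumber_eq_one [Finite G] (h : DeltaSet G₀ = ∅) (hU : IsAtomSeq G₀ U) :
    crossNumber U = 1 := by
  obtain ⟨L, hL, hLU⟩ := exists_mem_lengthSet_nsmul U hU.1.1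
  have hcard : Nat.card G * 1 ∈ LengthSet G₀ (Nat.card G • U) :=
    nsmul_mem_lengthSet hU.one_mem_lengthSet _
  have hpos : (Nat.card G : ℚ) ≠ 0 := Nat.cast_ne_zero.2 Nat.card_pos.ne'
  rw [lengthSet_subsingleton h hL hcard] at hLU
  exact mul_left_cancel₀ hpos (by exact_mod_cast hLU.symm)

lemma IsAtomSeq.deltaSet_nonempty [Finite G] (hU : IsAtomSeq G₀ U) (hne : crossNumber U ≠ 1) :
    (DeltaSet G₀).Nonempty :=
  Set.nonempty_iff_ne_empty.2 fun h => hne (hU.crossNumber_eq_one h)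

end PowerAtoms

section Independence

variable {G : Type*} [AddCommGroup G] {p : ℕ} {E : Finset G}

/-- `E` is independent modulo `n`: every integral linear relation on `E` has all its
coefficients divisible by `n`. -/
def IsIndepMod (n : ℕ) (E : Finset G) : Prop :=
  ∀ f : G → ℤ, ∑ x ∈ E, f x • x = 0 → ∀ x ∈ E, (n : ℤ) ∣ f x

lemma exists_sum_zsmul_eq_of_mem_closure {y : G} (hy : y ∈ AddSubgroup.closure (E : Set G)) :
    ∃ f : G → ℤ, ∑ x ∈ E, f x • x = y := by
  rw [← Submodule.span_int_eq_addSubgroupClosure] at hy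
  obtain ⟨f, -, hf⟩ := Submodule.mem_span_finset.1 hy
  exact ⟨f, hf⟩

lemma sum_zsmul_mem_closure (f : G → ℤ) :
    ∑ x ∈ E, f x • x ∈ AddSubgroup.closure (E : Set G) :=
  sum_mem fun _ hx => zsmul_mem (AddSubgroup.subset_closure hx) _

/-- A relation `∑ f x • x = 0` puts `f a • ⟨E⟩` inside `⟨E \ {a}⟩`. -/
lemma isIndepMod_of_mem_closure [DecidableEq G] {g : G}
    (hg : g ∈ AddSubgroup.closure (E : Set G))
    (hdvd : ∀ a ∈ E, ∀ j : ℤ, j • g ∈ AddSubgroup.closure (E.erase a : Set G) → (p : ℤ) ∣ j) :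
    IsIndepMod p E := by
  intro f hf a ha
  refine hdvd a ha (f a) ?_
  have hfa : f a • a ∈ AddSubgroup.closure (E.erase a : Set G) := by
    rw [← Finset.add_sum_erase E _ ha] at hf
    rw [eq_neg_of_add_eq_zero_left hf]
    exact neg_mem (sum_zsmul_mem_closure f)
  have hle : AddSubgroup.closure (E : Set G) ≤
      (AddSubgroup.closure (E.erase a : Set G)).comap (zsmulAddGroupHom (f a)) := by
    rw [AddSubgroup.closure_le]
    intro x hx
    rcases eq_or_ne x a with rfl | hxa
    · exact hfa
    · exact zsmul_mem (AddSubgroup.subset_closure (Finset.mem_erase.2 ⟨hxa, hx⟩)) _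
  exact hle hg

lemma IsIndepMod.pow_card_le_index [Finite G] [NeZero p] (hE : IsIndepMod p E) :
    p ^ E.card ≤
      (nsmulAddMonoidHom (α := AddSubgroup.closure (E : Set G)) p).range.index := by
  set K := AddSubgroup.closure (E : Set G)
  let comb (c : E → ZMod p) : K :=
    ∑ x : E, ((c x).cast : ℤ) • ⟨x, AddSubgroup.subset_closure x.2⟩
  have hinj : Function.Injective fun c =>
      (comb c : K ⧸ (nsmulAddMonoidHom (α := K) p).range) := by
    intro c c' hcc
    obtain ⟨y, hy⟩ := QuotientAddGroup.eq.1 hcc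
    obtain ⟨f, hf⟩ := exists_sum_zsmul_eq_of_mem_closure y.2
    obtain ⟨c, rfl⟩ := (Subtype.val_injective (p := (· ∈ E))).surjective_comp_right c
    obtain ⟨c', rfl⟩ := (Subtype.val_injective (p := (· ∈ E))).surjective_comp_right c'
    have hcomb (d : G → ZMod p) :
        (comb (d ∘ Subtype.val) : G) = ∑ x ∈ E, ((d x).cast : ℤ) • x := by
      simp [comb, Finset.sum_attach E fun x => ((d x).cast : ℤ) • x]
    have hrel : ∑ x ∈ E, ((c' x).cast - (c x).cast - p * f x : ℤ) • x = 0 := by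
      have hy' : p • (y : G) = -comb (c ∘ Subtype.val) + comb (c' ∘ Subtype.val) :=
        congrArg Subtype.val hy
      simp only [sub_smul, mul_smul, Finset.sum_sub_distrib, ← Finset.smul_sum, hf, ← hcomb,
        natCast_zsmul, hy']
      abel
    funext x
    have hdvd := (ZMod.intCast_zmod_eq_zero_iff_dvd _ _).2 (hE _ hrel x x.2)
    simpa [sub_eq_zero, eq_comm] using hdvd
  calc p ^ E.card = Nat.card (E → ZMod p) := by
        rw [Nat.card_fun, Nat.card_zmod, Nat.card_eq_fintype_card, Fintype.card_coe]
    _ ≤ _ := Nat.card_le_card_of_injective _ hinj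

lemma IsIndepMod.card_le_pRank [Finite G] (hp : 1 < p) (hE : IsIndepMod p E) :
    E.card ≤ pRank G p := by
  have : NeZero p := ⟨(Nat.zero_lt_of_lt hp).ne'⟩
  refine Nat.le_log_of_pow_le hp ?_
  calc p ^ E.card
      ≤ (nsmulAddMonoidHom (α := AddSubgroup.closure (E : Set G)) p).range.index :=
        hE.pow_card_le_index
    _ = Nat.card (nsmulAddMonoidHom (α := AddSubgroup.closure (E : Set G)) p).ker :=
        AddSubgroup.index_range
    _ ≤ Nat.card {x : G // p • x = 0} :=
        Nat.card_le_card_of_injective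
          (fun y => ⟨y.1, congrArg Subtype.val y.2⟩)
          fun y z hyz => Subtype.ext (Subtype.ext (Subtype.mk.inj hyz))

lemma exists_isIndepMod_card_eq_pRank (G : Type*) [AddCommGroup G] [Finite G] (hp : p.Prime) :
    ∃ B : Finset G, B.card = pRank G p ∧ IsIndepMod p B ∧ ∀ x ∈ B, p • x = 0 := by
  classical
  have : Fact p.Prime := ⟨hp⟩
  let V := AddSubgroup.torsionBy G p
  let _ : Module (ZMod p) V := AddSubgroup.torsionBy.zmodModule
  have : Module.Finite (ZMod p) V := Module.Finite.of_finite
  let b := Module.finBasis (ZMod p) V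
  have hb : Function.Injective fun i => (b i : G) := Subtype.val_injective.comp b.injective
  refine ⟨Finset.univ.image fun i => (b i : G), ?_, ?_, ?_⟩
  · have hcard : Nat.card {x : G // p • x = 0} = p ^ Module.finrank (ZMod p) V := by
      calc Nat.card {x : G // p • x = 0} = Nat.card V :=
            Nat.card_congr (Equiv.subtypeEquivRight fun _ => AddSubgroup.torsionBy.nsmul_iff.symm)
        _ = p ^ Module.finrank (ZMod p) V := by
            rw [Module.natCard_eq_pow_finrank (K := ZMod p), Nat.card_zmod]
    rw [Finset.card_image_of_injective _ hb, Finset.card_univ, Fintype.card_fin, pRank, hcard,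
      Nat.log_pow hp.one_lt]
  · intro f hf x hx
    obtain ⟨i, -, rfl⟩ := Finset.mem_image.1 hx
    rw [Finset.sum_image hb.injOn] at hf
    have hrel : ∑ i, (f (b i) : ZMod p) • b i = 0 := by
      apply Subtype.val_injective
      simpa [Int.cast_smul_eq_zsmul] using hf
    exact (ZMod.intCast_zmod_eq_zero_iff_dvd _ _).1
      (Fintype.linearIndependent_iff.1 b.linearIndependent _ hrel i)
  · intro x hx
    obtain ⟨i, -, rfl⟩ := Finset.mem_image.1 hx
    exact AddSubgroup.torsionBy.nsmul_iff.1 (b i).2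

end Independence

section LowerBounds

variable {G : Type*} [AddCommGroup G] [Finite G] {G₀ : Set G}

lemma sInf_deltaSet_le_sSup_deltaStar (h : (DeltaSet G₀).Nonempty) :
    sInf (DeltaSet G₀) ≤ sSup (DeltaStar G) := by
  have hfin : (DeltaStar G).Finite :=
    (Set.finite_range fun G₁ : Set G => sInf (DeltaSet G₁)).subset fun d ⟨G₁, _, hd⟩ =>
      ⟨G₁, hd.symm⟩
  exact le_csSup hfin.bddAbove ⟨G₀, h, rfl⟩

/-- The weight `card + q * count e`, read modulo `n * q`, takes on all atoms the value `n`, an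
element of order `q`. -/
lemma le_sSup_deltaStar_of_modEq [DecidableEq G] (e : G) {n q : ℕ} (hn : 0 < n)
    (hatom : ∀ U, IsAtomSeq G₀ U → card U + q * count e U ≡ n [MOD n * q])
    (hΔ : (DeltaSet G₀).Nonempty) : q ≤ sSup (DeltaStar G) := by
  let φ : Multiset G →+ ZMod (n * q) :=
    (Nat.castAddMonoidHom _).comp (cardHom + q • countAddMonoidHom e)
  have hφ (U : Multiset G) (hU : IsAtomSeq G₀ U) : φ U = (n : ZMod (n * q)) := by
    simpa [φ] using (ZMod.natCast_eq_natCast_iff _ _ _).2 (hatom U hU)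
  rcases Nat.eq_zero_or_pos q with rfl | hq
  · exact Nat.zero_le _
  have hord : addOrderOf (n : ZMod (n * q)) = q := by
    rw [ZMod.addOrderOf_coe n (by positivity), Nat.gcd_eq_right (Nat.dvd_mul_right n q),
      Nat.mul_div_cancel_left q hn]
  have hmem : sInf (DeltaSet G₀) ∈ DeltaSet G₀ := Nat.sInf_mem hΔ
  calc q ≤ sInf (DeltaSet G₀) := Nat.le_of_dvd (pos_of_mem_deltaSet hmem)
        (hord ▸ addOrderOf_dvd_of_mem_deltaSet φ hφ hmem)
    _ ≤ sSup (DeltaStar G) := sInf_deltaSet_le_sSup_deltaStar hΔ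

end LowerBounds

section OppositePair

variable {G : Type*} [AddCommGroup G] {G₀ : Set G} {U : Multiset G} {a : G}

lemma crossNumber_eq_card_div {n : ℕ} (h : ∀ x ∈ U, addOrderOf x = n) :
    crossNumber U = card U / n := by
  rw [crossNumber, map_congr rfl fun x hx => by rw [h x hx], map_const', sum_replicate,
    nsmul_eq_mul, div_eq_mul_inv]

lemma IsAtomSeq.eq_powerAtom_of_forall_eq (hU : IsAtomSeq G₀ U) (hfin : IsOfFinAddOrder a)
    (hUa : ∀ x ∈ U, x = a) : U = powerAtom a := by
  classical
  obtain ⟨b, hb⟩ := exists_mem_of_ne_zero hU.2.1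
  have haU : a ∈ U := hUa b hb ▸ hb
  refine hU.eq_powerAtom haU hfin (Nat.le_of_dvd (count_pos.2 haU) ?_)
  rw [eq_replicate_card.2 hUa, count_replicate_self, addOrderOf_dvd_iff_nsmul_eq_zero,
    ← sum_replicate, ← eq_replicate_card.2 hUa, hU.1.2]

lemma isZeroSumSeq_pair_neg (a : G) : IsZeroSumSeq {a, -a} {a, -a} :=
  ⟨fun _ hx => by simpa using hx, by simp⟩

lemma IsAtomSeq.eq_of_pair_neg (hU : IsAtomSeq {a, -a} U) (hfin : IsOfFinAddOrder a)
    (ha : a ≠ -a) : U = {a, -a} ∨ U = powerAtom a ∨ U = powerAtom (-a) := by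
  have hmem (x : G) (hx : x ∈ U) : x = a ∨ x = -a := hU.1.1 x hx
  by_cases haU : a ∈ U
  · by_cases hnaU : -a ∈ U
    · refine .inl (hU.eq_of_le (isZeroSumSeq_pair_neg a) (cons_ne_zero) ?_).symm
      exact (le_iff_subset (by simpa using ha)).2 (by simp [haU, hnaU])
    · exact .inr (.inl (hU.eq_powerAtom_of_forall_eq hfin fun x hx =>
        (hmem x hx).resolve_right fun h => hnaU (h ▸ hx)))
  · exact .inr (.inr (hU.eq_powerAtom_of_forall_eq hfin.neg fun x hx =>
      (hmem x hx).resolve_left fun h => haU (h ▸ hx)))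

lemma isAtomSeq_pair_neg (ha₀ : a ≠ 0) : IsAtomSeq {a, -a} {a, -a} := by
  refine isAtomSeq_iff.2 ⟨isZeroSumSeq_pair_neg a, cons_ne_zero, fun B hB hzero hB₀ => ?_⟩
  refine eq_of_le_of_card_le hB ?_
  by_contra! hlt
  have hpos : 0 < card B := card_pos.2 hB₀
  obtain ⟨b, rfl⟩ := card_eq_one.1 (show card B = 1 by simp at hlt; lia)
  have hb : b = 0 := by simpa using hzero.2
  have := hzero.1 b (mem_singleton_self b)
  simp_all

lemma addOrderOf_le_sSup_deltaStar [Finite G] (a : G) :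
    addOrderOf a ≤ sSup (DeltaStar G) + 2 := by
  classical
  rcases Nat.lt_or_ge (addOrderOf a) 3 with hlt | hge
  · lia
  obtain ⟨q, hq⟩ := Nat.exists_eq_add_of_le' (show 2 ≤ addOrderOf a by lia)
  have hfin := isOfFinAddOrder_of_finite a
  have ha : a ≠ -a := by
    intro h
    have := Nat.le_of_dvd two_pos (addOrderOf_dvd_iff_nsmul_eq_zero.2
      (show 2 • a = 0 by rw [two_nsmul]; exact eq_neg_iff_add_eq_zero.1 h))
    lia
  have hΔ : (DeltaSet {a, -a}).Nonempty := by
    refine (isAtomSeq_pair_neg (by rintro rfl; simp at ha)).deltaSet_nonempty ?_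
    rw [crossNumber_eq_card_div (n := addOrderOf a) (by simp), card_pair, Nat.cast_ofNat,
      Ne, div_eq_one_iff_eq (Nat.cast_ne_zero.2 (by lia))]
    exact_mod_cast (show 2 ≠ addOrderOf a by lia)
  have hle : q ≤ sSup (DeltaStar G) := by
    refine le_sSup_deltaStar_of_modEq (-a) (addOrderOf_pos a) (fun U hU => ?_) hΔ
    rcases hU.eq_of_pair_neg hfin ha with rfl | rfl | rfl
    · simp [ha, ha.symm, hq, Nat.ModEq, add_comm]
    · simp [powerAtom, count_replicate, ha, Nat.ModEq]
    · simp [powerAtom, Nat.ModEq, mul_comm]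
  lia

end OppositePair

section IndependentWithSum

variable {G : Type*} [AddCommGroup G] {n : ℕ} {B : Finset G}

lemma IsIndepMod.sum_notMem (hn : 1 < n) (hB : IsIndepMod n B) (hcard : 2 ≤ B.card) :
    ∑ x ∈ B, x ∉ B := by
  classical
  intro he
  obtain ⟨y, hy, hye⟩ := Finset.exists_mem_ne hcard (∑ x ∈ B, x)
  have hrel : ∑ x ∈ B, (1 - Pi.single (∑ x ∈ B, x) 1 : G → ℤ) x • x = 0 := by
    simp [sub_smul, Finset.sum_sub_distrib, Pi.single_apply, ite_smul, he]
  have hdvd := hB _ hrel y hy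
  rw [Pi.sub_apply, Pi.single_eq_of_ne hye, Pi.one_apply, sub_zero] at hdvd
  exact absurd (Int.natCast_dvd_natCast.1 hdvd) (by simpa using hn.ne')

variable [DecidableEq G]

/-- The set `B` together with the sum of its elements. For independent `B` of size `r`, whose
elements have order `n`, its minimal distance is a multiple of `r - 1`. -/
def insertSum (B : Finset G) : Finset G := insert (∑ x ∈ B, x) B

variable {U : Multiset G}

lemma IsIndepMod.dvd_count_add_count (hn : 1 < n) (hB : IsIndepMod n B) (hcard : 2 ≤ B.card)
    (hU : IsZeroSumSeq (insertSum B : Set G) U) {x : G} (hx : x ∈ B) :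
    n ∣ count x U + count (∑ x ∈ B, x) U := by
  have hsum : ∑ x ∈ B, ((count x U + count (∑ x ∈ B, x) U : ℕ) : ℤ) • x = 0 := by
    rw [← hU.2, Finset.sum_multiset_count_of_subset U (insertSum B) fun x hx =>
      hU.1 x (mem_toFinset.1 hx), insertSum, Finset.sum_insert (hB.sum_notMem hn hcard)]
    simp [add_smul, Finset.sum_add_distrib, Finset.smul_sum, add_comm]
  exact_mod_cast hB _ hsum x hx

lemma IsIndepMod.addOrderOf_of_mem_insertSum (hn : 1 < n) (hB : IsIndepMod n B)
    (hcard : 2 ≤ B.card) (htor : ∀ x ∈ B, n • x = 0) {x : G} (hx : x ∈ insertSum B) :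
    addOrderOf x = n := by
  have hpow : IsZeroSumSeq (insertSum B : Set G) (powerAtom x) := isZeroSumSeq_powerAtom hx
  have he := hB.sum_notMem hn hcard
  rcases Finset.mem_insert.1 hx with rfl | hxB
  · obtain ⟨y, hy⟩ := Finset.card_pos.1 (Nat.zero_lt_of_lt hcard)
    have hye : y ≠ ∑ x ∈ B, x := ne_of_mem_of_not_mem hy he
    refine Nat.dvd_antisymm (addOrderOf_dvd_iff_nsmul_eq_zero.2 ?_) ?_
    · rw [Finset.smul_sum, Finset.sum_eq_zero htor]
    · simpa [powerAtom, count_replicate, hye.symm] using hB.dvd_count_add_count hn hcard hpow hy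
  · have hxe : x ≠ ∑ x ∈ B, x := ne_of_mem_of_not_mem hxB he
    refine Nat.dvd_antisymm (addOrderOf_dvd_iff_nsmul_eq_zero.2 (htor x hxB)) ?_
    simpa [powerAtom, count_replicate, hxe] using hB.dvd_count_add_count hn hcard hpow hxB

lemma IsIndepMod.count_add_count_eq (hn : 1 < n) (hB : IsIndepMod n B) (hcard : 2 ≤ B.card)
    (hU : IsZeroSumSeq (insertSum B : Set G) U) (hU₀ : U ≠ 0) (hlt : ∀ x, count x U < n)
    {x : G} (hx : x ∈ B) : count x U + count (∑ x ∈ B, x) U = n := by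
  have he : count (∑ x ∈ B, x) U ≠ 0 := by
    intro he
    refine hU₀ (eq_zero_of_forall_notMem fun y hy => ?_)
    rcases Finset.mem_insert.1 (hU.1 y hy) with rfl | hyB
    · exact count_ne_zero.2 hy he
    · have hdvd := hB.dvd_count_add_count hn hcard hU hyB
      rw [he, add_zero] at hdvd
      exact count_ne_zero.2 hy (Nat.eq_zero_of_dvd_of_lt hdvd (hlt y))
  obtain ⟨m, hm⟩ := hB.dvd_count_add_count hn hcard hU hx
  have h1 := hlt x
  have h2 := hlt (∑ x ∈ B, x)
  have hm1 : m = 1 := by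
    have : n * m < n * 2 := by lia
    have := Nat.lt_of_mul_lt_mul_left this
    rcases m with _ | _ | m
    · lia
    · rfl
    · lia
  rw [hm, hm1, mul_one]

lemma IsIndepMod.card_add_mul_count_eq (hn : 1 < n) (hB : IsIndepMod n B) (hcard : 2 ≤ B.card)
    (hU : IsZeroSumSeq (insertSum B : Set G) U) (hU₀ : U ≠ 0) (hlt : ∀ x, count x U < n) :
    card U + (B.card - 1) * count (∑ x ∈ B, x) U = n + n * (B.card - 1) := by
  obtain ⟨r, hr⟩ := Nat.exists_eq_add_of_le' (Nat.one_le_of_lt hcard)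
  have hsum : ∑ x ∈ B, (count x U + count (∑ x ∈ B, x) U) = B.card * n := by
    rw [Finset.sum_congr rfl fun x hx => hB.count_add_count_eq hn hcard hU hU₀ hlt hx,
      Finset.sum_const, smul_eq_mul]
  rw [Finset.sum_add_distrib, Finset.sum_const, smul_eq_mul] at hsum
  rw [← sum_count_eq_card hU.1, insertSum, Finset.sum_insert (hB.sum_notMem hn hcard)]
  rw [hr, add_tsub_cancel_right] at *
  linarith

lemma IsIndepMod.card_add_mul_count_modEq [Finite G] (hn : 1 < n) (hB : IsIndepMod n B)
    (hcard : 2 ≤ B.card) (htor : ∀ x ∈ B, n • x = 0)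
    (hU : IsAtomSeq (insertSum B : Set G) U) :
    card U + (B.card - 1) * count (∑ x ∈ B, x) U ≡ n [MOD n * (B.card - 1)] := by
  by_cases hlt : ∀ x, count x U < n
  · rw [hB.card_add_mul_count_eq hn hcard hU.1 hU.2.1 hlt]
    exact Nat.add_mod_right _ _
  obtain ⟨x, hx⟩ := not_forall.1 hlt
  have hxU : x ∈ U := count_pos.1 (by lia)
  have hord := hB.addOrderOf_of_mem_insertSum hn hcard htor (hU.1.1 x hxU)
  rw [hU.eq_powerAtom hxU (isOfFinAddOrder_of_finite x) (by lia), powerAtom, hord,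
    card_replicate, count_replicate]
  split_ifs
  · rw [mul_comm (B.card - 1)]
    exact Nat.add_mod_right _ _
  · rw [mul_zero, add_zero]

lemma isZeroSumSeq_insertSum (hn : 1 ≤ n) (htor : ∀ x ∈ B, n • x = 0) :
    IsZeroSumSeq (insertSum B : Set G) (B.val + replicate (n - 1) (∑ x ∈ B, x)) := by
  refine ⟨fun x hx => (mem_add.1 hx).elim (fun h => Finset.mem_insert_of_mem h)
    fun h => Finset.mem_insert.2 (.inl (eq_of_mem_replicate h)), ?_⟩
  have hBsum : B.val.sum = ∑ x ∈ B, x := by rw [Finset.sum, map_id']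
  rw [sum_add, sum_replicate, hBsum, ← succ_nsmul', Nat.sub_add_cancel hn, Finset.smul_sum,
    Finset.sum_eq_zero htor]

lemma IsIndepMod.isAtomSeq_insertSum (hn : 1 < n) (hB : IsIndepMod n B) (hcard : 2 ≤ B.card)
    (htor : ∀ x ∈ B, n • x = 0) :
    IsAtomSeq (insertSum B : Set G) (B.val + replicate (n - 1) (∑ x ∈ B, x)) := by
  have he := hB.sum_notMem hn hcard
  refine isAtomSeq_iff.2 ⟨isZeroSumSeq_insertSum hn.le htor, fun h => ?_, fun A hA hzero hA₀ => ?_⟩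
  · have := congrArg card h
    rw [card_add, Finset.card_val, card_zero] at this
    lia
  set e := ∑ x ∈ B, x with he_def
  have hcount (x : G) : count x (B.val + replicate (n - 1) e) < n := by
    rw [count_add, count_replicate, count_eq_of_nodup B.nodup]
    split_ifs with hxB hex hex
    · exact absurd hxB (hex ▸ he)
    all_goals lia
  have hlt (x : G) : count x A < n := (count_le_of_le x hA).trans_lt (hcount x)
  obtain ⟨y, hy⟩ := Finset.card_pos.1 (Nat.zero_lt_of_lt hcard)
  have hye : y ≠ e := ne_of_mem_of_not_mem hy he
  have hyA : count y A ≤ 1 := by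
    simpa [count_replicate, hye.symm, count_eq_of_nodup B.nodup, hy] using count_le_of_le y hA
  have heA : count e A = n - 1 := by
    have := hB.count_add_count_eq hn hcard hzero hA₀ hlt hy
    have := hlt e
    lia
  have hcardA := hB.card_add_mul_count_eq hn hcard hzero hA₀ hlt
  refine eq_of_le_of_card_le hA ?_
  obtain ⟨m, rfl⟩ := Nat.exists_eq_add_of_le' hn.le
  obtain ⟨r, hr⟩ := Nat.exists_eq_add_of_le' (Nat.one_le_of_lt hcard)
  rw [card_add, card_replicate, Finset.card_val]
  rw [← he_def, heA, hr] at hcardA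
  simp only [hr, Nat.add_sub_cancel] at hcardA ⊢
  linarith

end IndependentWithSum

section RankBound

variable {G : Type*} [AddCommGroup G] {n : ℕ} {B : Finset G}

lemma card_le_sSup_deltaStar_add_one [Finite G] (hn : 1 < n) (hB : IsIndepMod n B)
    (htor : ∀ x ∈ B, n • x = 0) : B.card ≤ sSup (DeltaStar G) + 1 := by
  classical
  rcases Nat.lt_or_ge B.card 2 with hlt | hcard
  · lia
  have hΔ : (DeltaSet (insertSum B : Set G)).Nonempty := by
    have hatom := hB.isAtomSeq_insertSum hn hcard htor
    refine hatom.deltaSet_nonempty ?_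
    rw [crossNumber_eq_card_div fun x hx =>
      hB.addOrderOf_of_mem_insertSum hn hcard htor (hatom.1.1 x hx),
      Ne, div_eq_one_iff_eq (Nat.cast_ne_zero.2 (Nat.ne_zero_of_lt hn)), card_add,
      card_replicate, Finset.card_val]
    exact_mod_cast (show B.card + (n - 1) ≠ n by lia)
  have := le_sSup_deltaStar_of_modEq (∑ x ∈ B, x) (Nat.zero_lt_of_lt hn)
    (fun U hU => hB.card_add_mul_count_modEq hn hcard htor hU) hΔ
  lia

lemma pRank_le_sSup_deltaStar_add_one (G : Type*) [AddCommGroup G] [Finite G] {p : ℕ}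
    (hp : p.Prime) : pRank G p ≤ sSup (DeltaStar G) + 1 := by
  obtain ⟨B, hcard, hB, htor⟩ := exists_isIndepMod_card_eq_pRank G hp
  exact hcard ▸ card_le_sSup_deltaStar_add_one hp.one_lt hB htor

end RankBound

section ShortSubsums

variable {ι A : Type*} [AddCommMonoid A] [Finite A]

/-- Two prefixes have the same sum; cut out the segment between them. -/
lemma exists_lt_sum_map_eq (f : ι → A) {Q : Multiset ι} (hQ : Nat.card A ≤ card Q) :
    ∃ Q' < Q, (Q'.map f).sum = (Q.map f).sum := by
  have := Fintype.ofFinite A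
  induction Q using Quotient.inductionOn with | _ l
  let prefixSum (i : Fin (l.length + 1)) : A := ((l.take i).map f).sum
  obtain ⟨i, j, hij, hsum⟩ : ∃ i j, i < j ∧ prefixSum i = prefixSum j := by
    obtain ⟨i, j, hne, h⟩ := Fintype.exists_ne_map_eq_of_card_lt prefixSum
      (by simpa [Nat.lt_succ_iff] using hQ)
    rcases lt_or_gt_of_ne hne with hlt | hlt
    · exact ⟨i, j, hlt, h⟩
    · exact ⟨j, i, hlt, h.symm⟩
  have hsub : (l.take i ++ l.drop j).Sublist l := by
    conv_rhs => rw [← List.take_append_drop j l]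
    exact (List.take_sublist_take_left hij.le).append (List.Sublist.refl _)
  refine ⟨(l.take i ++ l.drop j : List ι), lt_of_le_of_ne (coe_le.2 hsub.subperm) ?_, ?_⟩
  · intro h
    have hlen : min i.1 l.length + (l.length - j) = l.length := by
      simpa using congrArg card h
    have := j.2
    have : i.1 < j.1 := hij
    lia
  · calc ((l.take i ++ l.drop j).map f).sum
        = ((l.take j).map f).sum + ((l.drop j).map f).sum := by
          rw [List.map_append, List.sum_append, show ((l.take i).map f).sum = _ from hsum]
      _ = (l.map f).sum := by rw [← List.sum_append, ← List.map_append, List.take_append_drop]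

lemma exists_le_card_lt_sum_map_eq (f : ι → A) (Q : Multiset ι) :
    ∃ Q' ≤ Q, card Q' < Nat.card A ∧ (Q'.map f).sum = (Q.map f).sum := by
  induction Q using Multiset.strongInductionOn with
  | ih Q ih =>
    rcases lt_or_ge (card Q) (Nat.card A) with hlt | hge
    · exact ⟨Q, le_rfl, hlt, rfl⟩
    · obtain ⟨Q₁, hQ₁, hsum₁⟩ := exists_lt_sum_map_eq f hge
      obtain ⟨Q', hQ', hcard, hsum⟩ := ih Q₁ hQ₁
      exact ⟨Q', hQ'.trans hQ₁.le, hcard, hsum.trans hsum₁⟩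

end ShortSubsums

section PowerAtomProd

variable {G : Type*} [AddCommGroup G] {S E : Finset G} {U : Multiset G}

/-- The sequence `∏ x ^ ord(x)` over `x ∈ S`, which every atom over `S` divides. -/
noncomputable def powerAtomProd (S : Finset G) : Multiset G := ∑ x ∈ S, powerAtom x

lemma mem_of_mem_powerAtomProd {x : G} (hx : x ∈ powerAtomProd S) : x ∈ S := by
  obtain ⟨y, hy, hxy⟩ := mem_sum.1 hx
  exact eq_of_mem_replicate hxy ▸ hy

lemma count_powerAtomProd [DecidableEq G] {x : G} (hx : x ∈ S) :
    count x (powerAtomProd S) = addOrderOf x := by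
  rw [powerAtomProd, count_sum', Finset.sum_eq_single_of_mem x hx fun y _ hy => by
    rw [powerAtom, count_replicate, if_neg hy], count_powerAtom_self]

variable [Finite G]

lemma card_mem_lengthSet_powerAtomProd (S : Finset G) :
    S.card ∈ LengthSet (S : Set G) (powerAtomProd S) :=
  card_mem_lengthSet_sum fun x hx => isAtomSeq_powerAtom hx (isOfFinAddOrder_of_finite x)

lemma isZeroSumSeq_powerAtomProd (S : Finset G) : IsZeroSumSeq (S : Set G) (powerAtomProd S) :=
  isZeroSumSeq_of_mem_lengthSet (card_mem_lengthSet_powerAtomProd S)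

lemma crossNumber_powerAtomProd (S : Finset G) : crossNumber (powerAtomProd S) = S.card := by
  calc crossNumber (powerAtomProd S) = ∑ x ∈ S, crossNumber (powerAtom x) :=
        _root_.map_sum (crossNumberHom G) powerAtom S
    _ = ∑ _x ∈ S, 1 :=
        Finset.sum_congr rfl fun x _ => crossNumber_powerAtom (isOfFinAddOrder_of_finite x)
    _ = S.card := by rw [Finset.sum_const, nsmul_one]

lemma IsAtomSeq.le_powerAtomProd (hU : IsAtomSeq (S : Set G) U) : U ≤ powerAtomProd S := by
  classical
  refine le_iff_count.2 fun x => ?_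
  by_cases hx : x ∈ U
  · rw [count_powerAtomProd (hU.1.1 x hx)]
    exact hU.count_le_addOrderOf (isOfFinAddOrder_of_finite x)
  · rw [count_eq_zero_of_notMem hx]
    exact Nat.zero_le _

lemma exists_le_powerAtomProd_sum_eq {y : G} (hy : y ∈ AddSubgroup.closure (E : Set G)) :
    ∃ T ≤ powerAtomProd E, T.sum = y := by
  obtain ⟨f, rfl⟩ := exists_sum_zsmul_eq_of_mem_closure hy
  have hpos (x : G) : (0 : ℤ) < addOrderOf x := by exact_mod_cast addOrderOf_pos x
  refine ⟨∑ x ∈ E, replicate (f x % addOrderOf x).toNat x, Finset.sum_le_sum fun x _ => ?_, ?_⟩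
  · refine replicate_le_replicate x |>.2 ?_
    have := Int.emod_lt_of_pos (f x) (hpos x)
    lia
  · rw [← coe_sumAddMonoidHom, _root_.map_sum]
    refine Finset.sum_congr rfl fun x _ => ?_
    rw [coe_sumAddMonoidHom, sum_replicate, ← natCast_zsmul,
      Int.toNat_of_nonneg (Int.emod_nonneg _ (hpos x).ne'), mod_addOrderOf_zsmul]

end PowerAtomProd

section LengthGap

variable {G : Type*} [AddCommGroup G] {G₀ : Set G} {C U : Multiset G}

/-- Trading a factorization whose atoms all have cross number `1` for one that involves the
heavier atom `U` shortens it, hence shortens it by at least `min Δ(G₀)`. -/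
lemma IsLCNSet.sInf_deltaSet_add_length_le (hLCN : IsLCNSet G₀) (hU : IsAtomSeq G₀ U)
    (hkU : 1 < crossNumber U) {l N : ℕ} (hl : l ∈ LengthSet G₀ C) (hN : N ∈ LengthSet G₀ (U + C))
    (hkN : crossNumber (U + C) = N) : sInf (DeltaSet G₀) + (1 + l) ≤ N := by
  refine sInf_deltaSet_add_le (add_mem_lengthSet hU.one_mem_lengthSet hl) hN ?_
  have hlC : (l : ℚ) ≤ crossNumber C := hLCN.le_crossNumber hl
  rw [crossNumber_add] at hkN
  have : (1 + l : ℚ) < N := by linarith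
  exact_mod_cast this

lemma IsLCNSet.not_le_sum (hLCN : IsLCNSet G₀) (hU : IsAtomSeq G₀ U) (hkU : 1 < crossNumber U)
    {Q : Multiset (Multiset G)} (hQ : ∀ A ∈ Q, IsAtomSeq G₀ A ∧ crossNumber A = 1)
    (hcard : card Q ≤ sInf (DeltaSet G₀) + 1) : ¬ U ≤ Q.sum := by
  intro hle
  obtain ⟨C, hC⟩ := Multiset.le_iff_exists_add.1 hle
  have hlen : card Q ∈ LengthSet G₀ (U + C) := ⟨Q, rfl, fun A hA => (hQ A hA).1, hC⟩
  have hkQ : crossNumber (U + C) = card Q := by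
    rw [← hC, crossNumber_multiset_sum, map_congr rfl fun A hA => (hQ A hA).2, map_const',
      sum_replicate, nsmul_one]
  obtain ⟨l, hl, rfl⟩ :=
    (hU.1.of_add_left (isZeroSumSeq_of_mem_lengthSet hlen)).exists_factorization
  have hgap := hLCN.sInf_deltaSet_add_length_le hU hkU ⟨l, rfl, hl, rfl⟩ hlen hkQ
  obtain rfl : l = 0 := card_eq_zero.1 (by lia)
  rw [sum_zero, add_zero] at hC
  obtain ⟨A, hA⟩ := exists_mem_of_ne_zero (show Q ≠ 0 by rintro rfl; exact hU.2.1 hC.symm)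
  have hAU : A = U := hU.eq_of_le (hQ A hA).1.1 (hQ A hA).1.2.1 (hC ▸ le_sum_of_mem hA)
  rw [← hAU, (hQ A hA).2] at hkU
  exact hkU.false

lemma IsLCNSet.sInf_deltaSet_add_two_le_card [Finite G] {S : Finset G}
    (hLCN : IsLCNSet (S : Set G)) (hΔ : (DeltaSet (S : Set G)).Nonempty) :
    sInf (DeltaSet (S : Set G)) + 2 ≤ S.card := by
  classical
  obtain ⟨U, hU, hkU⟩ := hLCN.exists_one_lt_crossNumber hΔ
  obtain ⟨C, hC⟩ := Multiset.le_iff_exists_add.1 hU.le_powerAtomProd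
  have hlen := card_mem_lengthSet_powerAtomProd S
  have hcross := crossNumber_powerAtomProd S
  rw [hC] at hlen hcross
  obtain ⟨l, hl, rfl⟩ :=
    (hU.1.of_add_left (isZeroSumSeq_of_mem_lengthSet hlen)).exists_factorization
  have hgap := hLCN.sInf_deltaSet_add_length_le hU hkU ⟨l, rfl, hl, rfl⟩ hlen hcross
  have hl₀ : l ≠ 0 := by
    rintro rfl
    obtain ⟨x, hx⟩ := exists_mem_of_ne_zero hU.2.1
    have hcount : count x U = addOrderOf x := by
      rw [← count_powerAtomProd (hU.1.1 x hx), hC, sum_zero, add_zero]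
    rw [hU.eq_powerAtom hx (isOfFinAddOrder_of_finite x) hcount.ge,
      crossNumber_powerAtom (isOfFinAddOrder_of_finite x)] at hkU
    exact hkU.false
  have := card_pos.2 hl₀
  lia

end LengthGap

section FullSupport

variable {G : Type*} [AddCommGroup G] [Finite G] {G₀ : Set G} {S : Finset G} {U : Multiset G}

lemma IsMinNonHalfFactorial.crossNumber_eq_one (hmin : IsMinNonHalfFactorial G₀)
    (hU : IsAtomSeq G₀ U) (hfull : ¬ ∀ x ∈ G₀, x ∈ U) : crossNumber U = 1 := by
  push Not at hfull
  obtain ⟨x, hx, hxU⟩ := hfull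
  refine IsAtomSeq.crossNumber_eq_one (hmin.2 (G₀ \ {x}) (Set.sdiff_singleton_ssubset.2 hx))
    ((isAtomSeq_iff_of_subset Set.sdiff_subset).2 ⟨hU, fun y hy => ⟨hU.1.1 y hy, ?_⟩⟩)
  rintro rfl
  exact hxU hy

lemma card_div_le_crossNumber {n : ℕ} (h : ∀ x ∈ U, addOrderOf x ≤ n) :
    (card U : ℚ) / n ≤ crossNumber U := by
  calc (card U : ℚ) / n = card (U.map fun x => (addOrderOf x : ℚ)⁻¹) • (n : ℚ)⁻¹ := by
        rw [card_map, nsmul_eq_mul, div_eq_mul_inv]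
    _ ≤ crossNumber U := card_nsmul_le_sum fun q hq => by
        obtain ⟨x, hx, rfl⟩ := mem_map.1 hq
        exact inv_anti₀ (by exact_mod_cast addOrderOf_pos x) (by exact_mod_cast h x hx)

lemma IsMinNonHalfFactorial.one_lt_crossNumber (hmin : IsMinNonHalfFactorial (S : Set G))
    (hLCN : IsLCNSet (S : Set G))
    (hord : ∀ x ∈ S, addOrderOf x ≤ sInf (DeltaSet (S : Set G)) + 2)
    (hU : IsAtomSeq (S : Set G) U) (hfull : ∀ x ∈ S, x ∈ U) : 1 < crossNumber U := by
  have hle : S.val ≤ U := (le_iff_subset S.nodup).2 hfull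
  rcases eq_or_lt_of_le (card_le_card hle) with hcard | hcard
  · obtain ⟨W, hW, hkW⟩ := hLCN.exists_one_lt_crossNumber hmin.1
    have hWfull : ∀ x ∈ S, x ∈ W := by
      by_contra h
      exact hkW.ne' (hmin.crossNumber_eq_one hW h)
    have hUW : U ≤ W := eq_of_le_of_card_le hle hcard.ge ▸ (le_iff_subset S.nodup).2 hWfull
    rwa [hW.eq_of_le hU.1 hU.2.1 hUW]
  · have hS := hLCN.sInf_deltaSet_add_two_le_card hmin.1
    calc (1 : ℚ) < card U / (sInf (DeltaSet (S : Set G)) + 2 : ℕ) := by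
          rw [one_lt_div (by positivity)]
          exact_mod_cast hS.trans_lt hcard
      _ ≤ crossNumber U := card_div_le_crossNumber fun x hx => hord x (hU.1.1 x hx)

end FullSupport

section ProperMultiples

lemma zsmul_mem_iff_addOrderOf_dvd {G : Type*} [AddCommGroup G] {H : AddSubgroup G} {g : G}
    {j : ℤ} : j • g ∈ H ↔ (addOrderOf (g : G ⧸ H) : ℤ) ∣ j := by
  rw [addOrderOf_dvd_iff_zsmul_eq_zero, ← QuotientAddGroup.mk_zsmul, QuotientAddGroup.eq_zero_iff]

variable {G : Type*} [AddCommGroup G] [DecidableEq G] {S E T : Finset G} {B : Multiset G} {g y : G}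

/-- The subgroup generated by the multiples `v_g(A) • g`, where `A` runs over the atoms over `S`
whose support is a proper subset of `S`. -/
def properMultiples (S : Finset G) (g : G) : AddSubgroup G :=
  AddSubgroup.closure
    {y | ∃ A, IsAtomSeq (S : Set G) A ∧ (¬ ∀ x ∈ S, x ∈ A) ∧ count g A • g = y}

lemma count_sum_nsmul_mem_properMultiples {l : Multiset (Multiset G)}
    (hl : ∀ A ∈ l, IsAtomSeq (S : Set G) A ∧ ¬ ∀ x ∈ S, x ∈ A) :
    count g l.sum • g ∈ properMultiples S g := by
  induction l using Multiset.induction_on with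
  | empty => simp [zero_mem]
  | cons A l ih =>
    rw [sum_cons, count_add, add_nsmul]
    have hA := hl A (mem_cons_self A l)
    exact add_mem (AddSubgroup.subset_closure ⟨A, hA.1, hA.2, rfl⟩)
      (ih fun C hC => hl C (mem_cons_of_mem hC))

lemma exists_mem_forall_mem_of_notMem_properMultiples {l : Multiset (Multiset G)}
    (hl : ∀ A ∈ l, IsAtomSeq (S : Set G) A) (hg : count g l.sum • g ∉ properMultiples S g) :
    ∃ A ∈ l, ∀ x ∈ S, x ∈ A := by
  by_contra! h
  exact hg (count_sum_nsmul_mem_properMultiples fun A hA => ⟨hl A hA, by simpa using h A hA⟩)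

lemma IsZeroSumSeq.count_nsmul_mem_closure (hB : IsZeroSumSeq (T : Set G) B) (g : G) :
    count g B • g ∈ AddSubgroup.closure (T.erase g : Set G) := by
  have hsum : count g B • g + (B.filter (· ≠ g)).sum = 0 := by
    rw [← sum_replicate, ← filter_eq', ← sum_add, filter_add_not, hB.2]
  rw [eq_neg_of_add_eq_zero_left hsum]
  refine neg_mem (multiset_sum_mem _ fun x hx => AddSubgroup.subset_closure ?_)
  obtain ⟨hxB, hxg⟩ := mem_filter.1 hx
  exact Finset.mem_erase.2 ⟨hxg, hB.1 x hxB⟩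

lemma count_replicate_add_of_le_powerAtomProd (hg : g ∉ E) {T : Multiset G}
    (hT : T ≤ powerAtomProd E) (j : ℕ) : count g (replicate j g + T) = j := by
  rw [count_add, count_replicate_self, count_eq_zero_of_notMem fun h =>
    hg (mem_of_mem_powerAtomProd (mem_of_le hT h)), add_zero]

variable [Finite G]

lemma exists_isZeroSumSeq_replicate_add {j : ℕ}
    (hj : j • g ∈ AddSubgroup.closure (E : Set G)) :
    ∃ T ≤ powerAtomProd E, IsZeroSumSeq (insert g E : Finset G) (replicate j g + T) := by
  obtain ⟨T, hT, hsum⟩ := exists_le_powerAtomProd_sum_eq (neg_mem hj)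
  refine ⟨T, hT, fun x hx => ?_, by rw [sum_add, sum_replicate, hsum, add_neg_cancel]⟩
  rcases mem_add.1 hx with hx | hx
  · exact Finset.mem_insert.2 (.inl (eq_of_mem_replicate hx))
  · exact Finset.mem_insert_of_mem (mem_of_mem_powerAtomProd (mem_of_le hT hx))

lemma mem_properMultiples_of_mem_closure (hgS : g ∈ S) {x : G} (hx : x ∈ S.erase g)
    (hyg : y ∈ AddSubgroup.zmultiples g)
    (hy : y ∈ AddSubgroup.closure ((S.erase g).erase x : Set G)) : y ∈ properMultiples S g := by
  obtain ⟨j, rfl⟩ := mem_multiples_iff_mem_zmultiples.2 hyg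
  obtain ⟨T, hT, hzero⟩ := exists_isZeroSumSeq_replicate_add hy
  obtain ⟨l, hl, hsum⟩ := hzero.exists_factorization
  have hg : g ∉ (S.erase g).erase x := by simp
  have hsub : insert g ((S.erase g).erase x) ⊆ S := by
    rw [Finset.insert_subset_iff]
    exact ⟨hgS, (Finset.erase_subset _ _).trans (Finset.erase_subset _ _)⟩
  have hxE : x ∉ insert g ((S.erase g).erase x) := by simpa using Finset.ne_of_mem_erase hx
  have hmem : count g l.sum • g ∈ properMultiples S g :=
    count_sum_nsmul_mem_properMultiples fun A hA =>
      ⟨((isAtomSeq_iff_of_subset (Finset.coe_subset.2 hsub)).1 (hl A hA)).1,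
        fun hfull => hxE ((hl A hA).1.1 x (hfull x (Finset.mem_of_mem_erase hx)))⟩
  rwa [hsum, count_replicate_add_of_le_powerAtomProd hg hT] at hmem

lemma exists_count_sum_nsmul_eq_of_mem_properMultiples (hy : y ∈ properMultiples S g) :
    ∃ Q : Multiset (Multiset G), (∀ A ∈ Q, IsAtomSeq (S : Set G) A ∧ ¬ ∀ x ∈ S, x ∈ A) ∧
      count g Q.sum • g = y := by
  rw [properMultiples, ← AddSubgroup.mem_toAddSubmonoid,
    AddSubgroup.closure_toAddSubmonoid_of_finite] at hy
  induction hy using AddSubmonoid.closure_induction with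
  | mem y hy =>
    obtain ⟨A, hA, hfull, rfl⟩ := hy
    exact ⟨{A}, by simpa using ⟨hA, by simpa using hfull⟩, by simp⟩
  | zero => exact ⟨0, by simp, by simp⟩
  | add y z _ _ ihy ihz =>
    obtain ⟨Q, hQ, rfl⟩ := ihy
    obtain ⟨R, hR, rfl⟩ := ihz
    exact ⟨Q + R, fun A hA => (mem_add.1 hA).elim (hQ A) (hR A),
      by rw [sum_add, count_add, add_nsmul]⟩

lemma exists_card_lt_addOrderOf_of_mem_properMultiples (hy : y ∈ properMultiples S g) :
    ∃ Q : Multiset (Multiset G), (∀ A ∈ Q, IsAtomSeq (S : Set G) A ∧ ¬ ∀ x ∈ S, x ∈ A) ∧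
      card Q < addOrderOf g ∧ count g Q.sum • g = y := by
  obtain ⟨R, hR, rfl⟩ := exists_count_sum_nsmul_eq_of_mem_properMultiples hy
  have : NeZero (addOrderOf g) := ⟨(addOrderOf_pos g).ne'⟩
  obtain ⟨Q, hQR, hcard, hsum⟩ :=
    exists_le_card_lt_sum_map_eq (fun A => (count g A : ZMod (addOrderOf g))) R
  have hcast (Q : Multiset (Multiset G)) :
      (Q.map fun A => (count g A : ZMod (addOrderOf g))).sum = (count g Q.sum : ℕ) :=
    (map_multiset_sum
      ((Nat.castAddMonoidHom (ZMod (addOrderOf g))).comp (countAddMonoidHom g)) Q).symm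
  rw [hcast, hcast, ZMod.natCast_eq_natCast_iff] at hsum
  exact ⟨Q, fun A hA => hR A (mem_of_le hQR hA), by simpa using hcard,
    nsmul_eq_nsmul_iff_modEq.2 hsum⟩

end ProperMultiples

section ProperMultiplesOrder

variable {G : Type*} [AddCommGroup G] [DecidableEq G] {S : Finset G} {B : Multiset G} {g : G}
  {h k : ℕ}

lemma IsZeroSumSeq.exists_le_count_eq {G₀ : Set G} (hB : IsZeroSumSeq G₀ B)
    (hBh : count g B • g = h • g) (hh : h < addOrderOf g) :
    ∃ B' ≤ B, IsZeroSumSeq G₀ B' ∧ count g B' = h := by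
  have hmod : count g B ≡ h [MOD addOrderOf g] := nsmul_eq_nsmul_iff_modEq.1 hBh
  have hle : h ≤ count g B := by
    rw [← Nat.mod_eq_of_lt hh, ← hmod]
    exact Nat.mod_le _ _
  have hrep : replicate (count g B - h) g ≤ B :=
    le_count_iff_replicate_le.1 (Nat.sub_le _ _)
  have hzero : (replicate (count g B - h) g).sum = 0 := by
    rw [sum_replicate, ← addOrderOf_dvd_iff_nsmul_eq_zero]
    exact (Nat.modEq_iff_dvd' hle).1 hmod.symm
  refine ⟨B - replicate (count g B - h) g, tsub_le_self,
    ⟨fun x hx => hB.1 x (mem_of_le tsub_le_self hx), ?_⟩, ?_⟩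
  · rw [← zero_add (sum _), ← hzero, ← sum_add, add_tsub_cancel_of_le hrep, hzero, hB.2]
  · rw [count_sub, count_replicate_self, Nat.sub_sub_self hle]

variable [Finite G]

/-- A short product of atoms that represents `h • g` contains, by the length gap, no atom of full
support, so any factorization of a part of it with exactly `h` terms `g` consists of proper
atoms. As `h` divides each of their multiplicities, one of them contains all `h` terms. -/
lemma exists_isAtomSeq_count_eq_addOrderOf (hmin : IsMinNonHalfFactorial (S : Set G))
    (hLCN : IsLCNSet (S : Set G))
    (hord : ∀ x ∈ S, addOrderOf x ≤ sInf (DeltaSet (S : Set G)) + 2) (hg : g ∈ S)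
    (hlt : addOrderOf (g : G ⧸ properMultiples S g) < addOrderOf g) :
    ∃ A, IsAtomSeq (S : Set G) A ∧ (¬ ∀ x ∈ S, x ∈ A) ∧
      count g A = addOrderOf (g : G ⧸ properMultiples S g) := by
  set h := addOrderOf (g : G ⧸ properMultiples S g)
  have hmem {j : ℕ} : j • g ∈ properMultiples S g ↔ h ∣ j := by
    rw [← natCast_zsmul, zsmul_mem_iff_addOrderOf_dvd, Int.natCast_dvd_natCast]
  obtain ⟨Q, hQ, hcard, hQh⟩ := exists_card_lt_addOrderOf_of_mem_properMultiples (hmem.2 dvd_rfl)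
  have hQzero : IsZeroSumSeq (S : Set G) Q.sum :=
    IsZeroSumSeq.multiset_sum fun A hA => (hQ A hA).1.1
  obtain ⟨B, hBQ, hB, hBh⟩ := hQzero.exists_le_count_eq hQh hlt
  obtain ⟨l, hl, rfl⟩ := hB.exists_factorization
  have hproper (A : Multiset G) (hA : A ∈ l) : ¬ ∀ x ∈ S, x ∈ A := fun hfull =>
    hLCN.not_le_sum (hl A hA) (hmin.one_lt_crossNumber hLCN hord (hl A hA) hfull)
      (fun C hC => ⟨(hQ C hC).1, hmin.crossNumber_eq_one (hQ C hC).1 (hQ C hC).2⟩)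
      (Nat.le_of_lt_succ (hcard.trans_le (hord g hg))) ((le_sum_of_mem hA).trans hBQ)
  have hpos : 0 < count g l.sum := hBh ▸ addOrderOf_pos _
  obtain ⟨A, hA, hgA⟩ := mem_join.1 (count_pos.1 hpos)
  have hdvd : h ∣ count g A :=
    hmem.1 (AddSubgroup.subset_closure ⟨A, hl A hA, hproper A hA, rfl⟩)
  exact ⟨A, hl A hA, hproper A hA, le_antisymm
    (hBh ▸ count_le_of_le g (le_sum_of_mem hA)) (Nat.le_of_dvd (count_pos.2 hgA) hdvd)⟩

lemma exists_addOrderOf_nsmul_mem_closure (hmin : IsMinNonHalfFactorial (S : Set G))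
    (hLCN : IsLCNSet (S : Set G))
    (hord : ∀ x ∈ S, addOrderOf x ≤ sInf (DeltaSet (S : Set G)) + 2) (hg : g ∈ S) :
    ∃ x ∈ S.erase g, addOrderOf (g : G ⧸ properMultiples S g) • g ∈
      AddSubgroup.closure ((S.erase g).erase x : Set G) := by
  have hle : addOrderOf (g : G ⧸ properMultiples S g) ≤ addOrderOf g :=
    Nat.le_of_dvd (addOrderOf_pos g)
      (addOrderOf_map_dvd (QuotientAddGroup.mk' (properMultiples S g)) g)
  rcases hle.eq_or_lt with heq | hlt
  · have hS := hLCN.sInf_deltaSet_add_two_le_card hmin.1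
    obtain ⟨x, hx⟩ : (S.erase g).Nonempty := by
      rw [← Finset.card_pos, Finset.card_erase_of_mem hg]
      lia
    exact ⟨x, hx, by rw [heq, addOrderOf_nsmul_eq_zero]; exact zero_mem _⟩
  · obtain ⟨A, hA, hproper, hcount⟩ :=
      exists_isAtomSeq_count_eq_addOrderOf hmin hLCN hord hg hlt
    push Not at hproper
    obtain ⟨x, hxS, hxA⟩ := hproper
    have hgA : g ∈ A := count_pos.1 (hcount ▸ addOrderOf_pos _)
    have hAx : IsZeroSumSeq (S.erase x : Set G) A :=
      ⟨fun y hy => Finset.mem_erase.2 ⟨fun h => hxA (h ▸ hy), hA.1.1 y hy⟩, hA.1.2⟩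
    refine ⟨x, Finset.mem_erase.2 ⟨fun h => hxA (h ▸ hgA), hxS⟩, ?_⟩
    rw [← hcount, Finset.erase_right_comm]
    exact hAx.count_nsmul_mem_closure g

lemma nsmul_notMem_properMultiples (hmin : IsMinNonHalfFactorial (S : Set G))
    (hLCN : IsLCNSet (S : Set G))
    (hord : ∀ x ∈ S, addOrderOf x ≤ sInf (DeltaSet (S : Set G)) + 2) (hg : g ∈ S)
    (hk : ∀ x ∈ S.erase g, k • g ∉ AddSubgroup.closure ((S.erase g).erase x : Set G)) :
    k • g ∉ properMultiples S g := by
  intro hmem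
  obtain ⟨x, hx, hmul⟩ := exists_addOrderOf_nsmul_mem_closure hmin hLCN hord hg
  rw [← natCast_zsmul, zsmul_mem_iff_addOrderOf_dvd, Int.natCast_dvd_natCast] at hmem
  obtain ⟨c, rfl⟩ := hmem
  exact hk x hx (by rw [mul_nsmul]; exact nsmul_mem hmul c)

/-- If some multiple of `g` is not proper, then `S \ {g}` is independent modulo a prime. -/
lemma card_le_sSup_deltaStar_add_two (hg : g ∈ S)
    (hgen : g ∈ AddSubgroup.closure (S.erase g : Set G)) (hk : k • g ∉ properMultiples S g) :
    S.card ≤ sSup (DeltaStar G) + 2 := by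
  set h := addOrderOf (g : G ⧸ properMultiples S g)
  have hh : h ≠ 1 := by
    intro h1
    refine hk ?_
    rw [← natCast_zsmul, zsmul_mem_iff_addOrderOf_dvd, show addOrderOf _ = 1 from h1]
    exact one_dvd _
  have hprime : h.minFac.Prime := Nat.minFac_prime hh
  have hindep : IsIndepMod h.minFac (S.erase g) := isIndepMod_of_mem_closure hgen fun x hx j hj =>
    (Int.natCast_dvd_natCast.2 h.minFac_dvd).trans <| zsmul_mem_iff_addOrderOf_dvd.1 <|
      mem_properMultiples_of_mem_closure hg hx (AddSubgroup.zsmul_mem_zmultiples g j) hj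
  have hrank := (hindep.card_le_pRank hprime.one_lt).trans
    (pRank_le_sSup_deltaStar_add_one G hprime)
  rw [Finset.card_erase_of_mem hg] at hrank
  lia

end ProperMultiplesOrder

section FullSupportAtom

variable {G : Type*} [AddCommGroup G] [Finite G] {S : Finset G} {A B C : Multiset G} {g : G}
  {k : ℕ}

lemma exists_add_eq_powerAtomProd [DecidableEq G] (hg : g ∈ S)
    (hgen : g ∈ AddSubgroup.closure (S.erase g : Set G)) (hk : k < addOrderOf g) :
    ∃ B C, B + C = powerAtomProd S ∧ IsZeroSumSeq (S : Set G) B ∧ C ≠ 0 ∧ count g B = k := by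
  obtain ⟨T, hT, hzero⟩ := exists_isZeroSumSeq_replicate_add (nsmul_mem hgen k)
  rw [Finset.insert_erase hg] at hzero
  have hcount := count_replicate_add_of_le_powerAtomProd (Finset.notMem_erase g S) hT k
  have hle : replicate k g + T ≤ powerAtomProd S := by
    rw [powerAtomProd, ← Finset.add_sum_erase S _ hg]
    exact add_le_add ((replicate_le_replicate g).2 hk.le) hT
  obtain ⟨C, hC⟩ := Multiset.le_iff_exists_add.1 hle
  refine ⟨_, C, hC.symm, hzero, ?_, hcount⟩
  rintro rfl
  rw [← hcount, ← add_zero (replicate k g + T), ← hC, count_powerAtomProd hg] at hk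
  exact hk.false

lemma IsLCNSet.eq_of_le_of_add_eq_powerAtomProd (hLCN : IsLCNSet (S : Set G))
    (hcard : S.card ≤ sInf (DeltaSet (S : Set G)) + 2) (hA : IsAtomSeq (S : Set G) A)
    (hkA : 1 < crossNumber A) (hB : IsZeroSumSeq (S : Set G) B) (hAB : A ≤ B)
    (hC₀ : C ≠ 0) (hBC : B + C = powerAtomProd S) : A = B := by
  obtain ⟨D, rfl⟩ := Multiset.le_iff_exists_add.1 hAB
  have hC : IsZeroSumSeq (S : Set G) C := hB.of_add_left (hBC ▸ isZeroSumSeq_powerAtomProd S)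
  obtain ⟨l, hl, rfl⟩ := (hA.1.of_add_left hB).exists_factorization
  obtain ⟨m, hm, rfl⟩ := hC.exists_factorization
  rw [add_assoc] at hBC
  have hgap := hLCN.sInf_deltaSet_add_length_le hA hkA
    (add_mem_lengthSet ⟨l, rfl, hl, rfl⟩ ⟨m, rfl, hm, rfl⟩)
    (hBC ▸ card_mem_lengthSet_powerAtomProd S) (hBC ▸ crossNumber_powerAtomProd S)
  have hm₀ : 0 < card m := card_pos.2 (by rintro rfl; exact hC₀ sum_zero)
  obtain rfl : l = 0 := card_eq_zero.1 (by lia)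
  rw [sum_zero, add_zero]

end FullSupportAtom

/-- If `G₀` is a minimal non-half-factorial LCN-set with
`min Δ(G₀) = max Δ*(G)`, `g ∈ G₀` with `g ∈ ⟨G₀ \ {g}⟩`, and `k ∈ [1, ord(g)]` is such
that `k·g ∉ ⟨E⟩` for every proper subset `E ⊊ G₀ \ {g}`, then there is an atom `A` over
`G₀` with `v_g(A) = k` and `k(A) > 1`. -/
theorem stmt_15 {G : Type*} [AddCommGroup G] [Fintype G] [DecidableEq G] (G₀ : Set G)
    (hmin : IsMinNonHalfFactorial G₀) (hLCN : IsLCNSet G₀)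
    (hmax : sInf (DeltaSet G₀) = sSup (DeltaStar G))
    (g : G) (hg : g ∈ G₀) (hgen : g ∈ AddSubgroup.closure (G₀ \ {g}))
    (k : ℕ) (hk1 : 1 ≤ k) (hk2 : k ≤ addOrderOf g)
    (hk : ∀ E : Set G, E ⊂ G₀ \ {g} → k • g ∉ AddSubgroup.closure E) :
    ∃ A : Multiset G, IsAtomSeq G₀ A ∧ A.count g = k ∧ 1 < crossNumber A := by
  obtain ⟨S, rfl⟩ : ∃ S : Finset G, (S : Set G) = G₀ := ⟨G₀.toFinite.toFinset, by simp⟩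
  rw [← Finset.coe_erase] at hgen
  have hord (x : G) (_ : x ∈ S) : addOrderOf x ≤ sInf (DeltaSet (S : Set G)) + 2 :=
    hmax ▸ addOrderOf_le_sSup_deltaStar x
  have hkH : k • g ∉ properMultiples S g :=
    nsmul_notMem_properMultiples hmin hLCN hord hg fun x hx => hk _ <| by
      rw [← Finset.coe_erase, Finset.coe_ssubset]
      exact Finset.erase_ssubset hx
  have hcard : S.card ≤ sInf (DeltaSet (S : Set G)) + 2 :=
    hmax ▸ card_le_sSup_deltaStar_add_two hg hgen hkH
  have hk_lt : k < addOrderOf g := hk2.lt_of_ne <| by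
    rintro rfl
    exact hkH (by rw [addOrderOf_nsmul_eq_zero]; exact zero_mem _)
  obtain ⟨B, C, hBC, hB, hC₀, rfl⟩ := exists_add_eq_powerAtomProd hg hgen hk_lt
  obtain ⟨l, hl, rfl⟩ := hB.exists_factorization
  obtain ⟨A, hAl, hfull⟩ := exists_mem_forall_mem_of_notMem_properMultiples hl hkH
  have hA : IsAtomSeq (S : Set G) A := hl A hAl
  have hkA : 1 < crossNumber A := hmin.one_lt_crossNumber hLCN hord hA hfull
  have hAB : A = l.sum :=
    hLCN.eq_of_le_of_add_eq_powerAtomProd hcard hA hkA hB (le_sum_of_mem hAl) hC₀ hBC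
  exact ⟨A, hA, congrArg (count g) hAB, hkA⟩
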